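/- arXiv:2203.14901 — 3 statements merged into one kernel-verified Lean document; each statement's English description precedes it below -/
import Mathlib

section
/- Let K be a field and let F = (f₁, …, f_s) be polynomials in K[x₁, …, x_k] such that the ideal J = ⟨f₁, …, f_s⟩ is zero-dimensional, i.e., the quotient K[x₁, …, x_k]/J is a finite-dimensional K-vector space. Let B be a finite set of monomials whose residue classes form a K-vector-space basis of K[x₁, …, x_k]/J, and let a be a monomial. Then there exist finite sets of monomials A₁, …, A_s such that for every b ∈ B with a·b ∉ B, the K-linear span of the set of shifts {m·f_j : m ∈ A_j, 1 ≤ j ≤ s} contains a polynomial of the form a·b − p, where every monomial occurring in p belongs to B. -/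
open MvPolynomial

/-!
A polynomial differs from its reduction modulo the ideal to a combination of monomials in `B` by
some `∑ j, c j * F j`, and expanding each `c j` into monomials writes this difference as a linear
combination of shifts. Finitely many polynomials involve finitely many shifts of each generator.
-/

section Shifts

variable {R σ ι : Type*} [CommSemiring R] (F : ι → MvPolynomial σ R)

/-- The rows of an elimination template: the shifts `m · F j` of the generators `F j` by the
monomials `m ∈ A j`, where a monomial is encoded by its exponent vector. -/
def shifts (A : ι → Finset (σ →₀ ℕ)) : Set (MvPolynomial σ R) :=
  {q | ∃ j, ∃ m ∈ A j, q = monomial m 1 * F j}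

variable {F}

theorem shifts_mono {A A' : ι → Finset (σ →₀ ℕ)} (h : A ≤ A') : shifts F A ⊆ shifts F A' := by
  rintro q ⟨j, m, hm, rfl⟩
  exact ⟨j, m, h j hm, rfl⟩

theorem mul_mem_span_shifts {A : ι → Finset (σ →₀ ℕ)} {j : ι} {c : MvPolynomial σ R}
    (hc : c.support ⊆ A j) : c * F j ∈ Submodule.span R (shifts F A) := by
  rw [c.as_sum, Finset.sum_mul]
  refine Submodule.sum_mem _ fun m hm => ?_
  have monomial_mul_eq_smul_shift :
      monomial m (coeff m c) * F j = coeff m c • (monomial m 1 * F j) := by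
    rw [← smul_mul_assoc, smul_monomial, smul_eq_mul, mul_one]
  rw [monomial_mul_eq_smul_shift]
  exact Submodule.smul_mem _ _ (Submodule.subset_span ⟨j, m, hc hm, rfl⟩)

theorem exists_mem_span_shifts {g : MvPolynomial σ R} (hg : g ∈ Ideal.span (Set.range F)) :
    ∃ A, g ∈ Submodule.span R (shifts F A) := by
  obtain ⟨c, rfl⟩ := Finsupp.mem_ideal_span_range_iff_exists_finsupp.1 hg
  exact ⟨fun j => (c j).support,
    Submodule.sum_mem _ fun j _ => mul_mem_span_shifts (Finset.Subset.refl _)⟩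

theorem exists_subset_span_shifts {T : Set (MvPolynomial σ R)} (hT : T.Finite)
    (hTF : T ⊆ Ideal.span (Set.range F)) : ∃ A, T ⊆ Submodule.span R (shifts F A) := by
  classical
  lift T to Finset (MvPolynomial σ R) using hT
  choose! A hA using fun g (hg : g ∈ T) => exists_mem_span_shifts (hTF hg)
  exact ⟨T.sup A, fun g hg => Submodule.span_mono (shifts_mono (Finset.le_sup hg)) (hA g hg)⟩

end Shifts

section Reduction

variable {R σ ι : Type*} [CommRing R]

theorem exists_mem_restrictSupport_sub_mem {J : Ideal (MvPolynomial σ R)} {B : Set (σ →₀ ℕ)}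
    (hspan : Submodule.span R
      (Set.range fun b : B => Ideal.Quotient.mk J (monomial (b : σ →₀ ℕ) (1 : R))) = ⊤)
    (g : MvPolynomial σ R) : ∃ p ∈ restrictSupport R B, g - p ∈ J := by
  have map_restrictSupport :
      (restrictSupport R B).map (Ideal.Quotient.mkₐ R J).toLinearMap = ⊤ := by
    rw [restrictSupport_eq_span, Submodule.map_span, Set.image_image, Set.image_eq_range]
    exact hspan
  obtain ⟨p, hp, hpg⟩ : Ideal.Quotient.mk J g ∈
      (restrictSupport R B).map (Ideal.Quotient.mkₐ R J).toLinearMap :=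
    map_restrictSupport ▸ Submodule.mem_top
  exact ⟨p, hp, Ideal.Quotient.eq.1 hpg.symm⟩

theorem elimination_template_well_defined_general (F : ι → MvPolynomial σ R) {B : Set (σ →₀ ℕ)}
    (hspan : Submodule.span R (Set.range fun b : B =>
      Ideal.Quotient.mk (Ideal.span (Set.range F)) (monomial (b : σ →₀ ℕ) (1 : R))) = ⊤)
    {T : Set (MvPolynomial σ R)} (hT : T.Finite) :
    ∃ A : ι → Finset (σ →₀ ℕ), ∀ g ∈ T, ∃ p ∈ restrictSupport R B,
      g - p ∈ Submodule.span R (shifts F A) := by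
  choose p hpB hpJ using exists_mem_restrictSupport_sub_mem hspan
  have differences_subset : (fun g => g - p g) '' T ⊆ Ideal.span (Set.range F) :=
    Set.image_subset_iff.2 fun g _ => hpJ g
  obtain ⟨A, hA⟩ := exists_subset_span_shifts (hT.image _) differences_subset
  exact ⟨A, fun g hg => ⟨p g, hpB g, hA (Set.mem_image_of_mem _ hg)⟩⟩

end Reduction

/-- **Theorem 1 (the elimination template is well defined).**
Let `F = (f₁, …, f_s)` be polynomials in `K[x₁, …, x_k]` generating a zero-dimensional ideal
`J` (i.e. the quotient is a finite-dimensional `K`-vector space), let `B` be a finite set of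
monomials whose residue classes form a basis of the quotient, and let `a` be a monomial.
Then there exist finite sets of monomials `A₁, …, A_s` such that for every `b ∈ B` with
`a·b ∉ B`, the `K`-linear span of the shifts `{m·f_j : m ∈ A_j}` contains a polynomial
`a·b − p` with all monomials of `p` in `B`. -/
theorem elimination_template_well_defined
    {K : Type*} [Field K] {k s : ℕ}
    (F : Fin s → MvPolynomial (Fin k) K)
    (J : Ideal (MvPolynomial (Fin k) K))
    (hJ : J = Ideal.span (Set.range F))
    (hfin : FiniteDimensional K (MvPolynomial (Fin k) K ⧸ J))
    (B : Finset ((Fin k) →₀ ℕ))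
    (hli : LinearIndependent K
      (fun b : B => Ideal.Quotient.mk J (monomial (b : (Fin k) →₀ ℕ) (1 : K))))
    (hspan : Submodule.span K
      (Set.range (fun b : B => Ideal.Quotient.mk J (monomial (b : (Fin k) →₀ ℕ) (1 : K)))) = ⊤)
    (a : (Fin k) →₀ ℕ) :
    ∃ A : Fin s → Finset ((Fin k) →₀ ℕ),
      ∀ b ∈ B, a + b ∉ B →
        ∃ p : MvPolynomial (Fin k) K,
          (∀ m ∈ p.support, m ∈ B) ∧
          monomial (a + b) (1 : K) - p ∈
            Submodule.span K
              {q : MvPolynomial (Fin k) K |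
                ∃ j : Fin s, ∃ m ∈ A j, q = monomial m (1 : K) * F j} := by
  subst hJ
  obtain ⟨A, hA⟩ := elimination_template_well_defined_general F (B := B) hspan
    (B.finite_toSet.image fun b => monomial (a + b) 1)
  exact ⟨A, fun b hb _ => hA _ (Set.mem_image_of_mem _ hb)⟩
end

section
/- Let K be a field, let A be an invertible n×n matrix over K, B an n×m matrix, C a p×n matrix, D a p×m matrix, and let M be the (n+p)×(n+m) block matrix [[A, B], [C, D]]. Then for every vector v ∈ Kᵐ, v lies in the row space of the Schur complement M/A = D − C·A⁻¹·B if and only if the vector in Kⁿ⁺ᵐ whose first n coordinates are 0 and whose last m coordinates are v lies in the row space of M. -/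
/-! The column operation `φ (u, w) = w - u A⁻¹ B` kills the top rows `(A i, B i)` of
`M = [[A, B], [C, D]]` and sends its bottom rows to the rows of `M/A`, so it maps the row space of
`M` onto that of `M/A`, and `φ (0, v) = v`. Conversely `(0, φ x)` differs from `x = (u, w)` by
`u A⁻¹ [A, B]`, a combination of the top rows, so `(0, φ x)` lies in the row space of `M` whenever
`x` does. -/

open Matrix

section RowSpace

variable {R n m p : Type*} [Fintype n]

theorem vecMul_mem_span_range_row [Semiring R] (x : n → R) (M : Matrix n m R) :
    x ᵥ* M ∈ Submodule.span R (Set.range M.row) :=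
  (range_vecMulLinear M).le ⟨x, rfl⟩

theorem vecMul_mem_span_range_row_fromRows [Semiring R] (x : n → R) (M : Matrix n m R)
    (N : Matrix p m R) : x ᵥ* M ∈ Submodule.span R (Set.range (fromRows M N).row) :=
  have range_subset : Set.range M.row ⊆ Set.range (fromRows M N).row :=
    Set.range_subset_iff.2 fun i ↦ ⟨Sum.inl i, rfl⟩
  Submodule.span_mono range_subset (vecMul_mem_span_range_row x M)

variable [Ring R]

/-- The block column operation `(u, w) ↦ w - u X` on row vectors, which subtracts from the last
block of coordinates the first block times `X`. With `X = A⁻¹ B` it eliminates the rows of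
`[A, B]`. -/
def columnElimination (X : Matrix n m R) : (n ⊕ m → R) →ₗ[R] (m → R) :=
  LinearMap.funLeft R R Sum.inr - X.vecMulLinear ∘ₗ LinearMap.funLeft R R Sum.inl

theorem columnElimination_apply (X : Matrix n m R) (x : n ⊕ m → R) :
    columnElimination X x = x ∘ Sum.inr - (x ∘ Sum.inl) ᵥ* X :=
  rfl

theorem columnElimination_sumElim_zero (X : Matrix n m R) (v : m → R) :
    columnElimination X (Sum.elim 0 v) = v := by
  simp [columnElimination_apply]

theorem columnElimination_row_fromCols (X : Matrix n m R) (U : Matrix p n R) (W : Matrix p m R)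
    (i : p) : columnElimination X ((fromCols U W).row i) = (W - U * X).row i :=
  rfl

variable [DecidableEq n] (A : Matrix n n R) [Invertible A] (B : Matrix n m R)
  (C : Matrix p n R) (D : Matrix p m R)

theorem columnElimination_comp_row_fromBlocks :
    columnElimination (⅟A * B) ∘ (fromBlocks A B C D).row =
      Sum.elim (0 : n → m → R) (D - C * ⅟A * B).row := by
  funext k
  rcases k with i | j
  · have top_eliminated : B - A * (⅟A * B) = 0 := by
      rw [Matrix.mul_invOf_cancel_left, sub_self]
    exact (columnElimination_row_fromCols _ A B i).trans (congrArg (row · i) top_eliminated)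
  · rw [Matrix.mul_assoc]
    exact columnElimination_row_fromCols _ C D j

theorem map_columnElimination_span_range_row_fromBlocks :
    (Submodule.span R (Set.range (fromBlocks A B C D).row)).map (columnElimination (⅟A * B)) =
      Submodule.span R (Set.range (D - C * ⅟A * B).row) := by
  have span_range_zero : Submodule.span R (Set.range (0 : n → m → R)) = ⊥ :=
    Submodule.span_eq_bot.2 (Set.forall_mem_range.2 fun _ ↦ rfl)
  rw [Submodule.map_span, ← Set.range_comp, columnElimination_comp_row_fromBlocks,
    Set.Sum.elim_range, Submodule.span_union, span_range_zero, bot_sup_eq]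

theorem sumElim_zero_columnElimination (x : n ⊕ m → R) :
    Sum.elim (0 : n → R) (columnElimination (⅟A * B) x) =
      x - ((x ∘ Sum.inl) ᵥ* ⅟A) ᵥ* fromCols A B := by
  rw [vecMul_fromCols, vecMul_vecMul, vecMul_vecMul, invOf_mul_self, vecMul_one,
    columnElimination_apply]
  funext k
  rcases k with i | j <;> simp

theorem rowSpace_schurComplement_iff_general (v : m → R) :
    v ∈ Submodule.span R (Set.range (D - C * ⅟A * B).row) ↔
      Sum.elim (0 : n → R) v ∈ Submodule.span R (Set.range (fromBlocks A B C D).row) := by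
  rw [← map_columnElimination_span_range_row_fromBlocks]
  constructor
  · rintro ⟨x, hx, rfl⟩
    rw [sumElim_zero_columnElimination]
    refine sub_mem hx ?_
    rw [← fromRows_fromCols_eq_fromBlocks]
    exact vecMul_mem_span_range_row_fromRows _ _ _
  · exact fun hv ↦ ⟨_, hv, columnElimination_sumElim_zero _ v⟩

end RowSpace

/-- **Row space and the Schur complement.** For a block matrix `M = [[A, B], [C, D]]` with `A`
invertible, a vector `v` lies in the row space of the Schur complement `M/A = D − C·A⁻¹·B`
iff the vector `(0, v)` (zero on the first `n` coordinates) lies in the row space of `M`. -/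
theorem rowSpace_schurComplement_iff
    {K : Type*} [Field K] {n m p : ℕ}
    (A : Matrix (Fin n) (Fin n) K) (B : Matrix (Fin n) (Fin m) K)
    (C : Matrix (Fin p) (Fin n) K) (D : Matrix (Fin p) (Fin m) K)
    (hA : IsUnit A) :
    ∀ v : Fin m → K,
      v ∈ Submodule.span K (Set.range (D - C * A⁻¹ * B)) ↔
      (Sum.elim (0 : Fin n → K) v) ∈
        Submodule.span K (Set.range (Matrix.fromBlocks A B C D)) := by
  let := hA.invertible
  rw [← invOf_eq_nonsing_inv]
  exact rowSpace_schurComplement_iff_general A B C D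
end

section
/- Let K be a field and let M = [[A, B], [C, D]] be a block matrix over K in which A is square and invertible. Suppose the columns of the right block [B; D] are indexed by a disjoint union E' ⊔ R ⊔ B̄, and suppose that for every r ∈ R the row space of M contains a vector that vanishes on all columns of the left block [A; C], vanishes on all columns in E', vanishes on all columns in R except r, and equals 1 at the column r. Then the Schur complement M/A = D − C·A⁻¹·B has the same property: for every r ∈ R, the row space of M/A contains a vector that vanishes on all columns in E', vanishes on all columns in R except r, and equals 1 at the column r. -/
/-!
Since `A` is invertible, `X = A⁻¹ * B` solves `A * X = B`, and the linear map `(u, v) ↦ v - u X`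
clears the left block of a row. It annihilates the rows of `[A, B]` and carries those of `[C, D]`
to those of `D - C * X = M/A`, so it maps the row space of `M` onto that of `M/A`. On vectors that
vanish on the left block it is the restriction to the right columns, hence it leaves all the
prescribed coordinates unchanged.
-/

section Elimination

open Matrix

variable {K ι κ ρ σ : Type*} [Fintype ι]

section Ring

variable [Ring K]

/-- Block elimination on row vectors, `(u, v) ↦ v - u X`. For `A` invertible and `X = A⁻¹ * B`
it gives the right part of `(u, v)` once `u` is cancelled by rows of `[A, B]`. It is a linear map
rather than multiplication by the block column `[-X; 1]` so that `κ` may be infinite. -/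
def eliminateLeft (X : Matrix ι κ K) : (ι ⊕ κ → K) →ₗ[K] (κ → K) :=
  LinearMap.funLeft K K Sum.inr - X.vecMulLinear ∘ₗ LinearMap.funLeft K K Sum.inl

theorem eliminateLeft_apply (X : Matrix ι κ K) (w : ι ⊕ κ → K) :
    eliminateLeft X w = w ∘ Sum.inr - (w ∘ Sum.inl) ᵥ* X :=
  rfl

theorem eliminateLeft_of_comp_inl_eq_zero (X : Matrix ι κ K) {w : ι ⊕ κ → K}
    (hw : w ∘ Sum.inl = 0) : eliminateLeft X w = w ∘ Sum.inr := by
  rw [eliminateLeft_apply, hw, zero_vecMul, sub_zero]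

variable {A : Matrix σ ι K} {B : Matrix σ κ K} {X : Matrix ι κ K}

theorem eliminateLeft_row_fromBlocks_inl (hX : A * X = B) (C : Matrix ρ ι K) (D : Matrix ρ κ K)
    (i : σ) : eliminateLeft X ((fromBlocks A B C D).row (Sum.inl i)) = 0 := by
  change B i - A i ᵥ* X = 0
  rw [← mul_apply_eq_vecMul, hX, sub_self]

theorem eliminateLeft_row_fromBlocks_inr (A : Matrix σ ι K) (B : Matrix σ κ K)
    (X : Matrix ι κ K) (C : Matrix ρ ι K) (D : Matrix ρ κ K) (k : ρ) :
    eliminateLeft X ((fromBlocks A B C D).row (Sum.inr k)) = (D - C * X).row k :=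
  rfl

theorem map_eliminateLeft_span_row_fromBlocks (hX : A * X = B) (C : Matrix ρ ι K)
    (D : Matrix ρ κ K) :
    (Submodule.span K (Set.range (fromBlocks A B C D).row)).map (eliminateLeft X) =
      Submodule.span K (Set.range (D - C * X).row) := by
  have rows : eliminateLeft X ∘ (fromBlocks A B C D).row =
      Sum.elim (fun _ => 0) (D - C * X).row := by
    funext k
    cases k with
    | inl i => exact eliminateLeft_row_fromBlocks_inl hX C D i
    | inr k => exact eliminateLeft_row_fromBlocks_inr A B X C D k
  have span_zero_rows : Submodule.span K (Set.range fun _ : σ => (0 : κ → K)) = ⊥ :=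
    Submodule.span_eq_bot.2 (Set.forall_mem_range.2 fun _ => rfl)
  rw [Submodule.map_span, ← Set.range_comp, rows, Set.Sum.elim_range, Submodule.span_union,
    span_zero_rows, bot_sup_eq]

end Ring

theorem comp_inr_mem_span_row_schurComplement [CommRing K] [DecidableEq ι]
    {A : Matrix ι ι K} (hA : IsUnit A)
    {B : Matrix ι κ K} {C : Matrix ρ ι K} {D : Matrix ρ κ K} {w : ι ⊕ κ → K}
    (hw : w ∈ Submodule.span K (Set.range (fromBlocks A B C D).row))
    (hw_left : w ∘ Sum.inl = 0) :
    w ∘ Sum.inr ∈ Submodule.span K (Set.range (D - C * A⁻¹ * B).row) := by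
  have hX : A * (A⁻¹ * B) = B :=
    mul_nonsing_inv_cancel_left A B ((isUnit_iff_isUnit_det A).1 hA)
  rw [Matrix.mul_assoc, ← map_eliminateLeft_span_row_fromBlocks hX C D,
    ← eliminateLeft_of_comp_inl_eq_zero (A⁻¹ * B) hw_left]
  exact Submodule.mem_map_of_mem hw

end Elimination

theorem schurComplement_is_template_general
    {K : Type*} [CommRing K] {ι ρ E' R Bbar : Type*} [Fintype ι] [DecidableEq ι]
    (A : Matrix ι ι K) (B : Matrix ι (E' ⊕ R ⊕ Bbar) K)
    (C : Matrix ρ ι K) (D : Matrix ρ (E' ⊕ R ⊕ Bbar) K)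
    (hA : IsUnit A)
    (hM : ∀ r : R,
      ∃ w ∈ Submodule.span K (Set.range (Matrix.fromBlocks A B C D)),
        (∀ i : ι, w (Sum.inl i) = 0) ∧
        (∀ e : E', w (Sum.inr (Sum.inl e)) = 0) ∧
        (∀ r' : R, r' ≠ r → w (Sum.inr (Sum.inr (Sum.inl r'))) = 0) ∧
        w (Sum.inr (Sum.inr (Sum.inl r))) = 1) :
    ∀ r : R,
      ∃ w ∈ Submodule.span K (Set.range (D - C * A⁻¹ * B)),
        (∀ e : E', w (Sum.inl e) = 0) ∧
        (∀ r' : R, r' ≠ r → w (Sum.inr (Sum.inl r')) = 0) ∧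
        w (Sum.inr (Sum.inl r)) = 1 := by
  intro r
  obtain ⟨w, hw, hw_left, hw_E', hw_R, hw_r⟩ := hM r
  exact ⟨w ∘ Sum.inr, comp_inr_mem_span_row_schurComplement hA hw (funext hw_left),
    hw_E', hw_R, hw_r⟩

/-- **Proposition 1 (Schur complement reduction of elimination templates).**
Let `M = [[A, B], [C, D]]` be a block matrix over a field with `A` square and invertible, and
let the columns of the right block be indexed by the disjoint union `E' ⊔ R ⊔ B̄`. If for every
`r ∈ R` the row space of `M` contains a vector vanishing on all columns of the left block, on
all columns in `E'` and on all columns in `R` except `r`, with value `1` at `r`, then the Schur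
complement `M/A = D − C·A⁻¹·B` has the same property. -/
theorem schurComplement_is_template
    {K : Type*} [Field K] {ι ρ E' R Bbar : Type*} [Fintype ι] [DecidableEq ι]
    (A : Matrix ι ι K) (B : Matrix ι (E' ⊕ R ⊕ Bbar) K)
    (C : Matrix ρ ι K) (D : Matrix ρ (E' ⊕ R ⊕ Bbar) K)
    (hA : IsUnit A)
    (hM : ∀ r : R,
      ∃ w ∈ Submodule.span K (Set.range (Matrix.fromBlocks A B C D)),
        (∀ i : ι, w (Sum.inl i) = 0) ∧
        (∀ e : E', w (Sum.inr (Sum.inl e)) = 0) ∧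
        (∀ r' : R, r' ≠ r → w (Sum.inr (Sum.inr (Sum.inl r'))) = 0) ∧
        w (Sum.inr (Sum.inr (Sum.inl r))) = 1) :
    ∀ r : R,
      ∃ w ∈ Submodule.span K (Set.range (D - C * A⁻¹ * B)),
        (∀ e : E', w (Sum.inl e) = 0) ∧
        (∀ r' : R, r' ≠ r → w (Sum.inr (Sum.inl r')) = 0) ∧
        w (Sum.inr (Sum.inl r)) = 1 :=
  schurComplement_is_template_general A B C D hA hM
end
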